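/- Let F be a field, let n ≥ 3 be odd, and let e₁, …, e_n be the standard basis of F^n. For 1 ≤ i ≤ (n−1)/2 set V_i = span(e_{2i−1}, e_{2i}) and V_i' = span(e_{2i}, e_{2i+1}), and set W = span(e_n) and W' = span(e₁). Suppose g ∈ GL_n(F) permutes the subspaces V₁, …, V_{(n−1)/2} among themselves and maps W to W, and also permutes the subspaces V₁', …, V'_{(n−1)/2} among themselves and maps W' to W'. Then g is a diagonal matrix. -/

import Mathlib

open Matrix

lemma aux_span2 {F : Type} [Field F] {n : ℕ} (a b : Fin n) (x : Fin n → F)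
    (hx : x ∈ Submodule.span F {Pi.single a (1 : F), Pi.single b (1 : F)}) (c : Fin n)
    (ha : c ≠ a) (hb : c ≠ b) : x c = 0 := by
  rw [Submodule.mem_span_pair] at hx
  obtain ⟨s, t, rfl⟩ := hx
  simp [Pi.single_apply, ha, hb]

lemma aux_span1 {F : Type} [Field F] {n : ℕ} (a : Fin n) (x : Fin n → F)
    (hx : x ∈ Submodule.span F {Pi.single a (1 : F)}) (c : Fin n)
    (ha : c ≠ a) : x c = 0 := by
  rw [Submodule.mem_span_singleton] at hx
  obtain ⟨s, rfl⟩ := hx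
  simp [Pi.single_apply, ha]

lemma aux_row {F : Type} [Field F] {n : ℕ} (g : Matrix (Fin n) (Fin n) F)
    (S T : Submodule F (Fin n → F)) (h : S.map (Matrix.vecMulLinear g) = T) (a : Fin n)
    (ha : Pi.single a (1 : F) ∈ S) : g a ∈ T := by
  rw [← h]
  refine ⟨_, ha, ?_⟩
  simp
  rfl

lemma aux_A {F : Type} [Field F] {n : ℕ} (g : GL (Fin n) F) (a : Fin n)
    (h : ∀ c, (g : Matrix (Fin n) (Fin n) F) a c = 0) : False := by
  have hi := Matrix.vecMul_injective_of_isUnit g.isUnit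
  have : (Pi.single a (1:F) : Fin n → F) = 0 := by
    apply hi
    ext c
    simp [h]
  simpa using congrFun this a

lemma aux_B {F : Type} [Field F] {n : ℕ} (g : GL (Fin n) F) (a b c : Fin n) (hab : a ≠ b)
    (h : ∀ d, d ≠ c → (g : Matrix (Fin n) (Fin n) F) a d = 0)
    (h' : ∀ d, d ≠ c → (g : Matrix (Fin n) (Fin n) F) b d = 0) : False := by
  have hi := Matrix.vecMul_injective_of_isUnit g.isUnit
  have : (Pi.single a ((g : Matrix (Fin n) (Fin n) F) b c)
      - Pi.single b ((g : Matrix (Fin n) (Fin n) F) a c) : Fin n → F) = 0 := by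
    apply hi
    ext d
    by_cases hd : d = c
    · subst hd
      simp [Matrix.sub_vecMul, mul_comm]
    · simp [Matrix.sub_vecMul, h d hd, h' d hd]
  have h2 := congrFun this b
  simp [Pi.single_apply, hab.symm] at h2
  refine aux_A g a fun d => ?_
  by_cases hd : d = c
  · rw [hd, h2]
  · exact h d hd

theorem stmt14 (F : Type) [Field F] (n m : ℕ) (hm : 1 ≤ m) (hn : n = 2 * m + 1)
    (g : GL (Fin n) F)
    (V V' : Fin m → Submodule F (Fin n → F)) (W W' : Submodule F (Fin n → F))
    (hV : ∀ i : Fin m, V i = Submodule.span F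
      {Pi.single (⟨2 * (i : ℕ), by omega⟩ : Fin n) (1 : F),
       Pi.single (⟨2 * (i : ℕ) + 1, by omega⟩ : Fin n) (1 : F)})
    (hV' : ∀ i : Fin m, V' i = Submodule.span F
      {Pi.single (⟨2 * (i : ℕ) + 1, by omega⟩ : Fin n) (1 : F),
       Pi.single (⟨2 * (i : ℕ) + 2, by omega⟩ : Fin n) (1 : F)})
    (hW : W = Submodule.span F {Pi.single (⟨n - 1, by omega⟩ : Fin n) (1 : F)})
    (hW' : W' = Submodule.span F {Pi.single (⟨0, by omega⟩ : Fin n) (1 : F)})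
    (hgV : ∀ i : Fin m, ∃ j : Fin m,
      (V i).map (Matrix.vecMulLinear (g : Matrix (Fin n) (Fin n) F)) = V j)
    (hgW : W.map (Matrix.vecMulLinear (g : Matrix (Fin n) (Fin n) F)) = W)
    (hgV' : ∀ i : Fin m, ∃ j : Fin m,
      (V' i).map (Matrix.vecMulLinear (g : Matrix (Fin n) (Fin n) F)) = V' j)
    (hgW' : W'.map (Matrix.vecMulLinear (g : Matrix (Fin n) (Fin n) F)) = W') :
    ∀ i j : Fin n, i ≠ j → (g : Matrix (Fin n) (Fin n) F) i j = 0 := by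
  have R : ∀ i : Fin m, ∃ j : Fin m, ∀ a : Fin n, ((a : ℕ) = 2 * i ∨ (a : ℕ) = 2 * i + 1) →
      ∀ c : Fin n, (c : ℕ) ≠ 2 * j → (c : ℕ) ≠ 2 * j + 1 →
      (g : Matrix (Fin n) (Fin n) F) a c = 0 := by
    intro i
    obtain ⟨j, hj⟩ := hgV i
    refine ⟨j, fun a ha c h1 h2 => ?_⟩
    have hr := aux_row _ _ _ hj a (by
      rw [hV]
      apply Submodule.subset_span
      rcases ha with ha | ha
      · left; congr 1; exact Fin.ext ha
      · right; rw [Set.mem_singleton_iff]; congr 1; exact Fin.ext ha)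
    rw [hV] at hr
    exact aux_span2 _ _ _ hr c (fun h => h1 (by rw [h])) (fun h => h2 (by rw [h]))
  have R' : ∀ i : Fin m, ∃ j : Fin m, ∀ a : Fin n, ((a : ℕ) = 2 * i + 1 ∨ (a : ℕ) = 2 * i + 2) →
      ∀ c : Fin n, (c : ℕ) ≠ 2 * j + 1 → (c : ℕ) ≠ 2 * j + 2 →
      (g : Matrix (Fin n) (Fin n) F) a c = 0 := by
    intro i
    obtain ⟨j, hj⟩ := hgV' i
    refine ⟨j, fun a ha c h1 h2 => ?_⟩
    have hr := aux_row _ _ _ hj a (by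
      rw [hV']
      apply Submodule.subset_span
      rcases ha with ha | ha
      · left; congr 1; exact Fin.ext ha
      · right; rw [Set.mem_singleton_iff]; congr 1; exact Fin.ext ha)
    rw [hV'] at hr
    exact aux_span2 _ _ _ hr c (fun h => h1 (by rw [h])) (fun h => h2 (by rw [h]))
  have RW : ∀ c : Fin n, c ≠ ⟨n - 1, by omega⟩ →
      (g : Matrix (Fin n) (Fin n) F) ⟨n - 1, by omega⟩ c = 0 := by
    intro c hc
    have hr := aux_row _ _ _ hgW ⟨n - 1, by omega⟩ (by
      rw [hW]; exact Submodule.subset_span rfl)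
    rw [hW] at hr
    exact aux_span1 _ _ hr c hc
  have RW' : ∀ c : Fin n, c ≠ ⟨0, by omega⟩ →
      (g : Matrix (Fin n) (Fin n) F) ⟨0, by omega⟩ c = 0 := by
    intro c hc
    have hr := aux_row _ _ _ hgW' ⟨0, by omega⟩ (by
      rw [hW']; exact Submodule.subset_span rfl)
    rw [hW'] at hr
    exact aux_span1 _ _ hr c hc
  have key : ∀ k : ℕ, ∀ hk : k < n, ∀ c : Fin n, c ≠ ⟨k, hk⟩ →
      (g : Matrix (Fin n) (Fin n) F) ⟨k, hk⟩ c = 0 := by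
    intro k
    induction k with
    | zero => intro hk; exact RW'
    | succ k ih =>
      intro hk
      have ih := ih (by omega)
      by_cases hlast : k + 1 = n - 1
      · have e : (⟨k + 1, hk⟩ : Fin n) = ⟨n - 1, by omega⟩ := Fin.ext hlast
        rw [e]; exact RW
      -- row `k+1` is supported on `{k, k+1}`
      have S : ∀ c : Fin n, (c : ℕ) ≠ k → (c : ℕ) ≠ k + 1 →
          (g : Matrix (Fin n) (Fin n) F) ⟨k + 1, hk⟩ c = 0 := by
        rcases Nat.even_or_odd' k with ⟨i, hi | hi⟩
        · obtain ⟨j, hj⟩ := R ⟨i, by omega⟩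
          have hij : (j : ℕ) = i := by
            by_contra hne
            refine aux_A g ⟨k, by omega⟩ fun c => ?_
            by_cases hc : c = ⟨k, by omega⟩
            · refine hj _ (Or.inl hi) c ?_ ?_ <;> rw [hc] <;> simp only <;> omega
            · exact ih c hc
          intro c h1 h2
          exact hj _ (Or.inr (by simp only; omega)) c (by omega) (by omega)
        · obtain ⟨j, hj⟩ := R' ⟨i, by omega⟩
          have hij : (j : ℕ) = i := by
            by_contra hne
            refine aux_A g ⟨k, by omega⟩ fun c => ?_
            by_cases hc : c = ⟨k, by omega⟩
            · refine hj _ (Or.inl hi) c ?_ ?_ <;> rw [hc] <;> simp only <;> omega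
            · exact ih c hc
          intro c h1 h2
          exact hj _ (Or.inr (by simp only; omega)) c (by omega) (by omega)
      -- row `k+1` vanishes at `k` or at `k+1`
      have T : (g : Matrix (Fin n) (Fin n) F) ⟨k + 1, hk⟩ ⟨k, by omega⟩ = 0 ∨
          (g : Matrix (Fin n) (Fin n) F) ⟨k + 1, hk⟩ ⟨k + 1, hk⟩ = 0 := by
        rcases Nat.even_or_odd' k with ⟨i, hi | hi⟩
        · obtain ⟨j, hj⟩ := R' ⟨i, by omega⟩
          have hj := hj ⟨k + 1, hk⟩ (Or.inl (by simp only; omega))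
          by_cases h : (j : ℕ) = i
          · left; apply hj <;> simp only <;> omega
          · right; apply hj <;> simp only <;> omega
        · obtain ⟨j, hj⟩ := R ⟨i + 1, by omega⟩
          have hj := hj ⟨k + 1, hk⟩ (Or.inl (by simp only; omega))
          by_cases h : (j : ℕ) = i + 1
          · left; apply hj <;> simp only <;> omega
          · right; apply hj <;> simp only <;> omega
      rcases T with T | T
      · intro c hc
        by_cases h : (c : ℕ) = k
        · have e : c = ⟨k, by omega⟩ := Fin.ext h
          rw [e]; exact T
        · exact S c h (fun h => hc (Fin.ext h))
      · exfalso
        refine aux_B g ⟨k, by omega⟩ ⟨k + 1, hk⟩ ⟨k, by omega⟩ (by simp) ih ?_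
        intro d hd
        by_cases h : (d : ℕ) = k + 1
        · have e : d = ⟨k + 1, hk⟩ := Fin.ext h
          rw [e]; exact T
        · exact S d (fun h => hd (Fin.ext h)) h
  intro i j hij
  exact key i i.2 j hij.symm
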